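/- Let L : (0,1] → [0,∞) be slowly varying at 0 and bounded away from 0 and ∞ on every (u,1]. Let α > −1/2, k ≥ 1, b ∈ [k−1,k]\{0}. Then lim_{n→∞} ∫_{k−1}^k x^{2α} ( L(x/n)/L(1/n) − L(b/n)/L(1/n) )² dx = 0. -/

import Mathlib

open Real Filter Set

/-!
The integrand tends to `0` pointwise by slow variation, so the point is to dominate it. No
measurability of `L` is assumed; when the integrand of index `n` is not measurable its Bochner
integral is `0`, so only the indices `n` with measurable integrand matter. For such an `n`, with
`c = L (b / n)`, only `|L - c|` (and not `L`) is known to be measurable, and only on the window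
`((k - 1) / n, k / n]`.

Both difficulties are met by replacing `L` with `c + |L - c|`. This function dominates `|L - c|`,
is measurable on the window, and its logarithm oscillates at most as much as `log L`
(`abs_log_fold_sub_le`). The uniform convergence theorem for slowly varying functions is then
proved for every measurable function whose oscillation is controlled by that of `log L`, on a
single window and uniformly over all such functions (`uniform_of_slow`). Chaining windows yields a
Potter bound for `c + |L - c|` (`potter_fold`), which gives the dominating function
`const * x ^ (α - 1/2)`, integrable since `α > -1/2`.
-/

open MeasureTheory Topology

/-- If the oscillation of each `φ j` is controlled by that of `h` near `v j → ∞`, and `h` is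
additively slowly varying, then `φ j` is close in measure to its value at an arbitrary moving
base point `s j`. -/
lemma measure_far_tendsto {h : ℝ → ℝ}
    (hh : ∀ t : ℝ, Tendsto (fun u => h (u + t) - h u) atTop (𝓝 0))
    {l ε : ℝ} (hε : 0 < ε) {v : ℕ → ℝ} (hv : Tendsto v atTop atTop)
    {φ : ℕ → ℝ → ℝ} (hφ : ∀ j, AEMeasurable (φ j) (volume.restrict (Ico 0 l)))
    (hosc : ∀ j, ∀ s ∈ Ico 0 l, ∀ t ∈ Ico 0 l,
      |φ j s - φ j t| ≤ |h (v j + s) - h (v j + t)|)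
    {s : ℕ → ℝ} (hs : ∀ j, s j ∈ Ico 0 l) :
    Tendsto (fun j => volume {t | t ∈ Ico 0 l ∧ ε ≤ |φ j t - φ j (s j)|}) atTop (𝓝 0) := by
  set g : ℕ → ℝ → ℝ := fun j => (Ico 0 l).indicator (fun t => φ j t - φ j (s j)) with hg
  have hgm : ∀ j, AEMeasurable (g j) volume := fun j =>
    (aemeasurable_indicator_iff measurableSet_Ico).2 ((hφ j).sub_const _)
  -- In the variable `w = t - s j` the pointwise limits do not depend on the moving base point.
  set ψ : ℕ → ℝ → ℝ := fun j w => g j (s j + w) with hψ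
  have hψm : ∀ j, AEStronglyMeasurable (ψ j) (volume.restrict (Icc (-l) l)) := fun j =>
    (((hgm j).comp_quasiMeasurePreserving
      (measurePreserving_add_left volume (s j)).quasiMeasurePreserving).aestronglyMeasurable).restrict
  have hlim : ∀ w, Tendsto (fun j => ψ j w) atTop (𝓝 0) := by
    intro w
    have h1 : Tendsto (fun j => v j + s j) atTop atTop :=
      tendsto_atTop_mono (fun j => by linarith [(hs j).1]) hv
    have h2 := ((hh w).comp h1).abs
    rw [abs_zero] at h2
    refine squeeze_zero_norm (fun j => ?_) h2
    simp only [hψ, hg, Function.comp, Real.norm_eq_abs]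
    by_cases hm : s j + w ∈ Ico 0 l
    · rw [indicator_of_mem hm]
      refine (hosc j _ hm _ (hs j)).trans (le_of_eq ?_)
      rw [add_assoc]
    · rw [indicator_of_notMem hm]; simp
  have hmeas := tendstoInMeasure_of_tendsto_ae (μ := volume.restrict (Icc (-l) l)) hψm
    (g := fun _ => (0 : ℝ)) (Eventually.of_forall hlim)
  have h3 := (tendstoInMeasure_iff_norm.1 hmeas) ε hε
  refine tendsto_of_tendsto_of_tendsto_of_le_of_le tendsto_const_nhds h3 (fun _ => zero_le)
    (fun j => ?_)
  simp only
  rw [← measure_preimage_add volume (s j)]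
  refine le_trans ?_ (Measure.le_restrict_apply _ _)
  refine measure_mono ?_
  rintro w ⟨hw, hw2⟩
  refine ⟨?_, ?_, ?_⟩
  · simp only [mem_ofPred_eq, hψ, hg, sub_zero, Real.norm_eq_abs]
    rw [indicator_of_mem hw]; exact hw2
  · linarith [hw.1, (hs j).2]
  · linarith [hw.2, (hs j).1]

/-- Uniform convergence theorem for an additively slowly varying `h` that need not be measurable:
uniformity holds for all measurable `φ` whose oscillation is controlled by that of `h`. -/
lemma uniform_of_slow {h : ℝ → ℝ}
    (hh : ∀ t : ℝ, Tendsto (fun u => h (u + t) - h u) atTop (𝓝 0))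
    {l ε : ℝ} (hl : 0 < l) (hε : 0 < ε) :
    ∃ V : ℝ, ∀ v ≥ V, ∀ φ : ℝ → ℝ, AEMeasurable φ (volume.restrict (Ico 0 l)) →
      (∀ s ∈ Ico 0 l, ∀ t ∈ Ico 0 l, |φ s - φ t| ≤ |h (v + s) - h (v + t)|) →
      ∀ s ∈ Ico 0 l, |φ s - φ 0| ≤ ε := by
  by_contra! hcon
  choose v hv φ hφ hosc s hs hbig using fun j : ℕ => hcon (j : ℝ)
  have hvt : Tendsto v atTop atTop := tendsto_atTop_mono hv tendsto_natCast_atTop_atTop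
  have hA := measure_far_tendsto hh (half_pos hε) hvt hφ hosc (s := fun _ => 0)
    (fun _ => ⟨le_rfl, hl⟩)
  have hB := measure_far_tendsto hh (half_pos hε) hvt hφ hosc hs
  have hAB := hA.add hB
  rw [add_zero] at hAB
  -- A point close both to `φ j 0` and to `φ j (s j)` would contradict `hbig`, so the two
  -- exceptional sets cover the whole window.
  have hle : ∀ j, ENNReal.ofReal l ≤
      volume {t | t ∈ Ico 0 l ∧ ε / 2 ≤ |φ j t - φ j 0|} +
      volume {t | t ∈ Ico 0 l ∧ ε / 2 ≤ |φ j t - φ j (s j)|} := by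
    intro j
    have : volume (Ico 0 l) = ENNReal.ofReal l := by simp
    rw [← this]
    refine le_trans (measure_mono ?_) (measure_union_le _ _)
    intro t ht
    by_contra hn
    simp only [mem_union, mem_ofPred_eq, ht, true_and, not_or, not_le] at hn
    have := abs_sub_le (φ j (s j)) (φ j t) (φ j 0)
    rw [abs_sub_comm (φ j (s j)) (φ j t)] at this
    linarith [hbig j, hn.1, hn.2]
  have := ge_of_tendsto' hAB hle
  simp only [nonpos_iff_eq_zero, ENNReal.ofReal_eq_zero] at this
  linarith

/-- In logarithmic scale, folding the half-line at `c` by `p ↦ c + |p - c|` is `1`-Lipschitz. -/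
lemma abs_log_fold_sub_le {c p q : ℝ} (hc : 0 < c) (hp : 0 < p) (hq : 0 < q) :
    |log (c + |p - c|) - log (c + |q - c|)| ≤ |log p - log q| := by
  wlog hpq : q ≤ p generalizing p q with H
  · have := H hq hp (le_of_not_ge hpq)
    rwa [abs_sub_comm, abs_sub_comm (log p)]
  obtain ⟨r, hr, rfl⟩ : ∃ r : ℝ, 1 ≤ r ∧ p = r * q :=
    ⟨p / q, (one_le_div hq).2 hpq, by field_simp⟩
  have hr0 : 0 < r := by linarith
  have hP : 0 < c + |r * q - c| := by positivity
  have hQ : 0 < c + |q - c| := by positivity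
  have h1 : c + |r * q - c| ≤ r * (c + |q - c|) := by
    have : |r * q - c| ≤ r * |q - c| + (r - 1) * c := by
      have e : r * q - c = r * (q - c) + (r - 1) * c := by ring
      rw [e]
      refine (abs_add_le _ _).trans (le_of_eq ?_)
      rw [abs_mul, abs_of_pos hr0, abs_of_nonneg (mul_nonneg (by linarith) hc.le)]
    nlinarith
  have h2 : c + |q - c| ≤ r * (c + |r * q - c|) := by
    have : r * |q - c| ≤ |r * q - c| + (r - 1) * c := by
      rw [← abs_of_pos hr0, ← abs_mul, abs_of_pos hr0]
      have e : r * (q - c) = (r * q - c) + -((r - 1) * c) := by ring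
      rw [e]
      refine (abs_add_le _ _).trans (le_of_eq ?_)
      rw [abs_neg, abs_of_nonneg (mul_nonneg (by linarith : (0 : ℝ) ≤ r - 1) hc.le)]
    have h3 : r * (c + |q - c|) ≤ r * (r * (c + |r * q - c|)) := by
      nlinarith [abs_nonneg (r * q - c), mul_nonneg (sub_nonneg.2 hr) (abs_nonneg (r * q - c)),
        mul_nonneg (mul_nonneg (sub_nonneg.2 hr) (sub_nonneg.2 hr)) hc.le,
        mul_nonneg (mul_nonneg (sub_nonneg.2 hr) hr0.le) (abs_nonneg (r * q - c))]
    exact le_of_mul_le_mul_left h3 hr0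
  rw [log_mul hr0.ne' hq.ne', add_sub_cancel_right, abs_of_nonneg (log_nonneg hr), abs_le]
  have g1 := log_le_log hP h1
  have g2 := log_le_log hQ h2
  rw [log_mul hr0.ne' hQ.ne'] at g1
  rw [log_mul hr0.ne' hP.ne'] at g2
  constructor <;> linarith

lemma quasiMeasurePreserving_mul_exp_neg {r l : ℝ} (hr : 0 < r) {S : Set ℝ}
    (hmaps : ∀ s ∈ Ico 0 l, r * exp (-s) ∈ S) :
    Measure.QuasiMeasurePreserving (fun s : ℝ => r * exp (-s))
      (volume.restrict (Ico 0 l)) (volume.restrict S) := by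
  have hm : Measurable (fun s : ℝ => r * exp (-s)) := by fun_prop
  refine ⟨hm, Measure.AbsolutelyContinuous.mk fun N hN hN0 => ?_⟩
  rw [Measure.map_apply hm hN, Measure.restrict_apply (hm hN)]
  rw [Measure.restrict_apply hN] at hN0
  have h0 : volume ((fun x : ℝ => log r - log x) '' (N ∩ S ∩ Ioi 0)) = 0 := by
    refine addHaar_image_eq_zero_of_differentiableOn_of_addHaar_eq_zero volume ?_
      (measure_mono_null inter_subset_left hN0)
    intro x hx
    have hx0 : x ≠ 0 := (show (0 : ℝ) < x from hx.2).ne'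
    exact ((differentiableAt_log hx0).const_sub _).differentiableWithinAt
  refine measure_mono_null ?_ h0
  rintro s ⟨hs1, hs2⟩
  refine ⟨r * exp (-s), ⟨⟨hs1, hmaps s hs2⟩, mul_pos hr (exp_pos _)⟩, ?_⟩
  simp only
  rw [log_mul hr.ne' (exp_pos _).ne', log_exp]
  ring

/-- Potter bound for `c + |L - c|` on the window `((k - 1) / n, k / n]`, with base point `k / n`,
uniformly in those `c` for which `|L - c|` is measurable on the window. -/
lemma potter_fold {L : ℝ → ℝ} (hpos : ∀ x ∈ Ioc (0 : ℝ) 1, 0 < L x)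
    (hslow : ∀ t : ℝ, 0 < t → Tendsto (fun x => L (t * x) / L x) (𝓝[>] 0) (𝓝 1))
    {k : ℕ} (hk : 1 ≤ k) {ε : ℝ} (hε : 0 < ε) :
    ∀ᶠ n : ℕ in atTop, ∀ c > 0,
      AEMeasurable (fun x => |L (x / n) - c|) (volume.restrict (Ioc ((k : ℝ) - 1) k)) →
      ∀ x ∈ Ioc ((k : ℝ) - 1) k,
        c + |L (x / n) - c| ≤ exp (ε * (1 + (log k - log x))) * (c + |L (k / n) - c|) := by
  have hk1 : (1 : ℝ) ≤ k := by exact_mod_cast hk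
  have hk0 : (0 : ℝ) < k := by linarith
  set h : ℝ → ℝ := fun u => log (L (exp (-u))) with hh
  have hLpos : ∀ u : ℝ, 0 ≤ u → 0 < L (exp (-u)) := fun u hu =>
    hpos _ ⟨exp_pos _, exp_le_one_iff.2 (by linarith)⟩
  have hslow' : ∀ t : ℝ, Tendsto (fun u => h (u + t) - h u) atTop (𝓝 0) := by
    intro t
    have hE : Tendsto (fun u : ℝ => exp (-u)) atTop (𝓝[>] 0) :=
      tendsto_exp_atBot_nhdsGT.comp tendsto_neg_atTop_atBot
    have h1 := (((hslow (exp (-t)) (exp_pos _)).comp hE).log one_ne_zero)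
    rw [log_one] at h1
    refine h1.congr' ?_
    filter_upwards [eventually_ge_atTop 0, eventually_ge_atTop (-t)] with u hu hut
    simp only [Function.comp, hh]
    have hu1 := (hLpos _ hu).ne'
    have hut1 := (hLpos (u + t) (by linarith)).ne'
    rw [← exp_add, show -t + -u = -(u + t) by ring, log_div hut1 hu1]
  -- For `k = 1` the window is a half-line in logarithmic scale, to be covered by unit steps; a
  -- half-open interval of length `2` contains such a step with its end point.
  set l : ℝ := if k = 1 then 2 else log k - log (k - 1) with hl
  have hl0 : 0 < l := by
    rw [hl]
    split_ifs with h1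
    · norm_num
    · have : (2 : ℝ) ≤ k := by exact_mod_cast (by omega : 2 ≤ k)
      exact sub_pos.2 (log_lt_log (by linarith) (by linarith))
  obtain ⟨V, hV⟩ := uniform_of_slow hslow' hl0 hε
  have hev : Tendsto (fun n : ℕ => log (n : ℝ) - log k) atTop atTop :=
    tendsto_atTop_add_const_right _ _ (tendsto_log_atTop.comp tendsto_natCast_atTop_atTop)
  filter_upwards [hev.eventually_ge_atTop V, hev.eventually_ge_atTop 0, eventually_gt_atTop 0]
    with n hnV hn0 hnpos c hc hmeas x hx
  have hn : (0 : ℝ) < n := by exact_mod_cast hnpos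
  have hx0 : 0 < x := by linarith [hx.1]
  set v₀ : ℝ := log n - log k with hv₀
  set H : ℝ → ℝ := fun u => log (c + |L (exp (-u)) - c|) with hH
  have hstep : ∀ v ≥ v₀, (∀ s ∈ Ico 0 l, n * exp (-v) * exp (-s) ∈ Ioc ((k : ℝ) - 1) k) →
      ∀ s ∈ Ico 0 l, |H (v + s) - H v| ≤ ε := by
    intro v hv hmaps s hs
    have hφ : AEMeasurable (fun s => H (v + s)) (volume.restrict (Ico 0 l)) := by
      have h1 : AEMeasurable (fun x => log (c + |L (x / n) - c|))
          (volume.restrict (Ioc ((k : ℝ) - 1) k)) :=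
        measurable_log.comp_aemeasurable (hmeas.const_add c)
      have h2 := h1.comp_quasiMeasurePreserving
        (quasiMeasurePreserving_mul_exp_neg (mul_pos hn (exp_pos (-v))) hmaps)
      refine h2.congr (Eventually.of_forall fun s => ?_)
      simp only [Function.comp, hH]
      rw [mul_assoc, mul_div_cancel_left₀ _ hn.ne', ← exp_add, neg_add]
    have := hV v (by linarith) (fun s => H (v + s)) hφ (fun s hs t ht => by
      exact abs_log_fold_sub_le hc (hLpos _ (by linarith [hs.1])) (hLpos _ (by linarith [ht.1])))
      s hs
    simpa using this
  have hnv₀ : (n : ℝ) * exp (-v₀) = k := by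
    rw [hv₀, neg_sub, exp_sub, exp_log hn, exp_log hk0]; field_simp
  set w : ℝ := log k - log x with hw
  have hw0 : 0 ≤ w := sub_nonneg.2 (log_le_log hx0 hx.2)
  have key : H (v₀ + w) ≤ H v₀ + ε * (1 + w) := by
    by_cases h1 : k = 1
    · have hl2 : l = 2 := by rw [hl, if_pos h1]
      have hst : ∀ v ≥ v₀, ∀ s ∈ Ico 0 l, |H (v + s) - H v| ≤ ε := by
        intro v hv
        refine hstep v hv fun s hs => ⟨?_, ?_⟩
        · have : (0 : ℝ) < n * exp (-v) * exp (-s) := by positivity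
          simpa [h1] using this
        · calc n * exp (-v) * exp (-s) ≤ n * exp (-v₀) * 1 := by
                gcongr
                exact exp_le_one_iff.2 (by linarith [hs.1])
            _ = k := by rw [mul_one, hnv₀]
      have hind : ∀ m : ℕ, H (v₀ + m) ≤ H v₀ + m * ε := by
        intro m
        induction m with
        | zero => simp
        | succ m ih =>
          have h2 := (abs_le.1 (hst (v₀ + m) (by linarith [(Nat.cast_nonneg m : (0 : ℝ) ≤ m)]) 1
            (by rw [hl2]; constructor <;> norm_num))).2
          push_cast
          rw [← add_assoc]
          linarith
      have hf1 := Nat.floor_le hw0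
      have hf2 := Nat.lt_floor_add_one w
      have h3 := (abs_le.1 (hst (v₀ + ⌊w⌋₊)
        (by linarith [(Nat.cast_nonneg ⌊w⌋₊ : (0 : ℝ) ≤ ⌊w⌋₊)]) (w - ⌊w⌋₊)
        (by rw [hl2]; constructor <;> linarith))).2
      rw [show v₀ + (⌊w⌋₊ : ℝ) + (w - ⌊w⌋₊) = v₀ + w by ring] at h3
      nlinarith [hind ⌊w⌋₊]
    · have hk2 : (2 : ℝ) ≤ k := by exact_mod_cast (by omega : 2 ≤ k)
      have hlk : l = log k - log (k - 1) := by rw [hl, if_neg h1]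
      have h3 := (abs_le.1 (hstep v₀ le_rfl (fun s hs => by
        rw [hnv₀]
        constructor
        · have h4 : log ((k : ℝ) - 1) - log k < -s := by linarith [hs.2]
          have h5 := exp_lt_exp.2 h4
          rw [exp_sub, exp_log (by linarith), exp_log hk0, div_lt_iff₀ hk0] at h5
          linarith
        · have : exp (-s) ≤ 1 := exp_le_one_iff.2 (by linarith [hs.1])
          nlinarith) w ⟨hw0, by
            rw [hlk, hw]
            linarith [log_lt_log (by linarith) hx.1]⟩)).2
      nlinarith [mul_nonneg hε.le hw0]
  have e1 : exp (-(v₀ + w)) = x / n := by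
    rw [hv₀, hw, show -(log (n : ℝ) - log k + (log k - log x)) = log x - log n by ring,
      exp_sub, exp_log hx0, exp_log hn]
  have e2 : exp (-v₀) = k / n := by
    rw [hv₀, neg_sub, exp_sub, exp_log hk0, exp_log hn]
  simp only [hH, e1, e2] at key
  have p1 : 0 < c + |L (x / n) - c| := by positivity
  have p2 : 0 < c + |L (k / n) - c| := by positivity
  have := exp_le_exp.2 key
  rw [exp_add, exp_log p1, exp_log p2] at this
  linarith

theorem lemma3_part_ii (L : ℝ → ℝ)
    (hL0 : ∀ x ∈ Set.Ioc (0 : ℝ) 1, 0 ≤ L x)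
    (hslow : ∀ t : ℝ, 0 < t →
      Tendsto (fun x => L (t * x) / L x) (nhdsWithin 0 (Set.Ioi 0)) (nhds 1))
    (hbdd : ∀ u ∈ Set.Ioo (0 : ℝ) 1, ∃ m M : ℝ, 0 < m ∧
      ∀ x ∈ Set.Ioc u 1, m ≤ L x ∧ L x ≤ M)
    (α : ℝ) (hα : -(1/2 : ℝ) < α) (k : ℕ) (hk : 1 ≤ k)
    (b : ℝ) (hb : b ∈ Set.Icc ((k : ℝ) - 1) (k : ℝ)) (hb0 : b ≠ 0) :
    Tendsto (fun n : ℕ =>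
        ∫ x in ((k : ℝ) - 1)..(k : ℝ),
          x ^ (2 * α) * (L (x / n) / L (1 / n) - L (b / n) / L (1 / n)) ^ 2)
      atTop (nhds 0) := by
  have hk1 : (1 : ℝ) ≤ k := by exact_mod_cast hk
  have hk0 : (0 : ℝ) < k := by linarith
  have hbpos : 0 < b := lt_of_le_of_ne (by linarith [hb.1]) hb0.symm
  have hpos : ∀ x ∈ Ioc (0 : ℝ) 1, 0 < L x := by
    intro x hx
    obtain ⟨m, M, hm, hM⟩ := hbdd (x / 2) ⟨by linarith [hx.1], by linarith [hx.2]⟩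
    exact hm.trans_le (hM x ⟨by linarith [hx.1], hx.2⟩).1
  have hratio : ∀ x : ℝ, 0 < x → Tendsto (fun n : ℕ => L (x / n) / L (1 / n)) atTop (𝓝 1) := by
    intro x hx
    have h1 : Tendsto (fun n : ℕ => 1 / (n : ℝ)) atTop (𝓝[>] 0) := by
      refine tendsto_nhdsWithin_iff.2 ⟨tendsto_one_div_atTop_nhds_zero_nat, ?_⟩
      filter_upwards [eventually_gt_atTop 0] with n hn
      have hn' : (0 : ℝ) < n := by exact_mod_cast hn
      exact one_div_pos.2 hn'
    refine ((hslow x hx).comp h1).congr fun n => ?_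
    simp only [Function.comp, mul_one_div]
  classical
  set f : ℕ → ℝ → ℝ := fun n x =>
    x ^ (2 * α) * (L (x / n) / L (1 / n) - L (b / n) / L (1 / n)) ^ 2 with hf
  set μ : Measure ℝ := volume.restrict (Ioc ((k : ℝ) - 1) k) with hμ
  have hkk : (k : ℝ) - 1 ≤ k := by linarith
  have huI : uIoc ((k : ℝ) - 1) k = Ioc ((k : ℝ) - 1) k := uIoc_of_le hkk
  -- Nonmeasurable integrands are replaced by `0`, which does not change the (junk) integral.
  set g : ℕ → ℝ → ℝ := fun n => if AEStronglyMeasurable (f n) μ then f n else 0 with hg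
  have hfg : ∀ n, ∫ x in ((k : ℝ) - 1)..k, f n x = ∫ x in ((k : ℝ) - 1)..k, g n x := by
    intro n
    by_cases hm : AEStronglyMeasurable (f n) μ
    · simp only [hg, if_pos hm]
    · simp only [hg, if_neg hm]
      rw [intervalIntegral.integral_of_le hkk, integral_non_aestronglyMeasurable hm]
      simp
  have hgm : ∀ n, AEStronglyMeasurable (g n) μ := by
    intro n
    by_cases hm : AEStronglyMeasurable (f n) μ
    · simp only [hg, if_pos hm]; exact hm
    · simp only [hg, if_neg hm]; exact aestronglyMeasurable_zero
  -- This choice of the Potter exponent makes `2 * α - 2 * ε = α - 1 / 2 > -1`.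
  set ε : ℝ := (2 * α + 1) / 4 with hεdef
  have hε : 0 < ε := by rw [hεdef]; linarith
  set C : ℝ := exp (ε * (1 + log k)) with hC
  have hbound : ∀ᶠ n : ℕ in atTop, ∀ x ∈ Ioc ((k : ℝ) - 1) k,
      ‖g n x‖ ≤ 36 * C ^ 2 * x ^ (α - 1 / 2) := by
    filter_upwards [potter_fold hpos hslow hk hε, eventually_gt_atTop 0,
      (hratio b hbpos).eventually_lt_const (by norm_num : (1 : ℝ) < 2),
      (hratio k hk0).eventually_lt_const (by norm_num : (1 : ℝ) < 2),
      tendsto_natCast_atTop_atTop.eventually_ge_atTop (k : ℝ)] with n hpot hnpos hrb hrk hnk x hx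
    have hx0 : 0 < x := by linarith [hx.1]
    have hn : (0 : ℝ) < n := by exact_mod_cast hnpos
    have hLpos : ∀ y : ℝ, 0 < y → y ≤ k → 0 < L (y / n) := fun y hy hyk =>
      hpos _ ⟨div_pos hy hn, (div_le_one hn).2 (hyk.trans hnk)⟩
    have hA : 0 < L (1 / n) := hLpos 1 one_pos hk1
    have hc : 0 < L (b / n) := hLpos b hbpos hb.2
    have hLk : 0 < L (k / n) := hLpos k hk0 le_rfl
    by_cases hm : AEStronglyMeasurable (f n) μ
    swap
    · simp only [hg, if_neg hm, Pi.zero_apply, norm_zero]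
      positivity
    simp only [hg, if_pos hm]
    have hmeas : AEMeasurable (fun x => |L (x / n) - L (b / n)|) μ := by
      have h1 : AEMeasurable (fun x => √(f n x * x ^ (-(2 * α))) * L (1 / n)) μ :=
        ((hm.aemeasurable.mul
          (measurable_id.pow_const (-(2 * α))).aemeasurable).sqrt).mul_const _
      refine h1.congr ?_
      filter_upwards [ae_restrict_mem measurableSet_Ioc] with y hy
      have hy0 : 0 < y := by linarith [hy.1]
      have e : f n y * y ^ (-(2 * α)) = ((L (y / n) - L (b / n)) / L (1 / n)) ^ 2 := by
        simp only [hf]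
        rw [mul_right_comm, ← rpow_add hy0, add_neg_cancel, rpow_zero, one_mul, sub_div]
      rw [e, sqrt_sq_eq_abs, abs_div, abs_of_pos hA]
      field_simp
    have hP := hpot _ hc hmeas x hx
    have hEx : exp (ε * (1 + (log k - log x))) = C * x ^ (-ε) := by
      rw [hC, rpow_def_of_pos hx0, ← exp_add]; congr 1; ring
    rw [hEx] at hP
    have hCx : 0 < C * x ^ (-ε) := by positivity
    have hbase : L (b / n) + |L (k / n) - L (b / n)| ≤ 6 * L (1 / n) := by
      rw [div_lt_iff₀ hA] at hrb hrk
      have : |L (k / n) - L (b / n)| ≤ L (k / n) + L (b / n) := by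
        rw [abs_le]; constructor <;> linarith
      linarith
    have hD : |L (x / n) - L (b / n)| / L (1 / n) ≤ 6 * (C * x ^ (-ε)) := by
      rw [div_le_iff₀ hA]
      nlinarith [mul_le_mul_of_nonneg_left hbase hCx.le]
    have hxp : 0 < x ^ (2 * α) := rpow_pos_of_pos hx0 _
    have e : f n x = x ^ (2 * α) * (|L (x / n) - L (b / n)| / L (1 / n)) ^ 2 := by
      simp only [hf]
      rw [← sub_div, div_pow, div_pow, sq_abs]
    have hexp : x ^ (2 * α) * (x ^ (-ε)) ^ 2 = x ^ (α - 1 / 2) := by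
      rw [← rpow_natCast, ← rpow_mul hx0.le, ← rpow_add hx0]
      congr 1
      rw [hεdef]; push_cast; ring
    rw [e, Real.norm_eq_abs, abs_of_nonneg (by positivity)]
    calc x ^ (2 * α) * (|L (x / n) - L (b / n)| / L (1 / n)) ^ 2
        ≤ x ^ (2 * α) * (6 * (C * x ^ (-ε))) ^ 2 := by gcongr
      _ = 36 * C ^ 2 * (x ^ (2 * α) * (x ^ (-ε)) ^ 2) := by ring
      _ = 36 * C ^ 2 * x ^ (α - 1 / 2) := by rw [hexp]
  have hlim : ∀ x ∈ Ioc ((k : ℝ) - 1) k, Tendsto (fun n => g n x) atTop (𝓝 0) := by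
    intro x hx
    have hx0 : 0 < x := by linarith [hx.1]
    have h1 : Tendsto (fun n => f n x) atTop (𝓝 0) := by
      have := (((hratio x hx0).sub (hratio b hbpos)).pow 2).const_mul (x ^ (2 * α))
      rwa [sub_self, zero_pow two_ne_zero, mul_zero] at this
    refine squeeze_zero_norm (fun n => ?_) (norm_zero (E := ℝ) ▸ h1.norm)
    by_cases hm : AEStronglyMeasurable (f n) μ
    · simp only [hg, if_pos hm]; exact le_rfl
    · simp only [hg, if_neg hm, Pi.zero_apply, norm_zero]; exact norm_nonneg _
  have hmain := intervalIntegral.tendsto_integral_filter_of_dominated_convergence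
    (μ := volume) (a := (k : ℝ) - 1) (b := k) (F := g) (f := fun _ => (0 : ℝ)) (l := atTop)
    (fun x => 36 * C ^ 2 * x ^ (α - 1 / 2))
    (Eventually.of_forall fun n => by rw [huI]; exact hgm n)
    (by
      filter_upwards [hbound] with n hn
      refine Eventually.of_forall fun x hx => hn x ?_
      rwa [huI] at hx)
    ((intervalIntegral.intervalIntegrable_rpow' (by linarith)).const_mul _)
    (Eventually.of_forall fun x hx => hlim x (by rwa [huI] at hx))
  rw [intervalIntegral.integral_zero] at hmain
  exact hmain.congr fun n => (hfg n).symm
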